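/- The order of the group SL_*^1(2,A_n) is (q²−1)·q^{4n−3}·(q+1). -/

import Mathlib

/-!
Let `A` be a finite local ring with involution `*`, maximal ideal `m` and set `S` of skew
elements. A matrix in `SL_*^1(2, A)` has a unit in its first column. If the top left entry is a
unit, the matrix factors uniquely as `diag(a, (a*)⁻¹) · [[1, 0], [s, 1]] · [[1, u], [0, 1]]` with
`a ∈ Aˣ` and `s, u ∈ S`; if it is not, left multiplication by `J` produces such a matrix with
`s ∈ S ∩ m`. Hence the order is `|Aˣ| · |S| · (|S| + |S ∩ m|)`.

If `c - c*` is a unit for some `c`, then `A = S ⊕ cS` and `m = (S ∩ m) ⊕ c(S ∩ m)`, so `|S|` and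
`|S ∩ m|` are the square roots of `|A|` and `|m|`. For `A = A_n` these are `q ^ (2n)` and
`q ^ (2n - 2)`.
-/

open Polynomial Matrix

noncomputable section

abbrev TruncPoly (K : Type) [CommRing K] (n : ℕ) := AdjoinRoot (X ^ n : K[X])

def trStar (K : Type) [CommRing K] (σ : K →+* K) (n : ℕ) :
    TruncPoly K n →+* TruncPoly K n :=
  AdjoinRoot.lift ((AdjoinRoot.of _).comp σ) (-(AdjoinRoot.root _)) (by
    have h : (AdjoinRoot.root (X ^ n : K[X])) ^ n = 0 := by
      rw [← AdjoinRoot.mk_X, ← map_pow, AdjoinRoot.mk_self]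
    rw [eval₂_pow, eval₂_X, neg_pow, h, mul_zero])

/-- The matrix `J = [[0,1],[1,0]]`. -/
def jMat (A : Type) [CommRing A] : Matrix (Fin 2) (Fin 2) A := !![0, 1; 1, 0]

/-- The involution `g ↦ g*` on 2×2 matrices: `(g*)_{ij} = (g_{ji})*`. -/
def mStar (A : Type) [CommRing A] (st : A →+* A) (g : Matrix (Fin 2) (Fin 2) A) :
    Matrix (Fin 2) (Fin 2) A := (g.map st)ᵀ

/-- The group `SL_*^1(2,A)` (as a set of matrices): `g* J g = J`. -/
def SLstarSet (A : Type) [CommRing A] (st : A →+* A) : Set (Matrix (Fin 2) (Fin 2) A) :=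
  {g | mStar A st g * jMat A * g = jMat A}

section Skew

variable {A : Type*} [CommRing A] {st : A →+* A}

/-- The skew elements `a* = -a` of a ring with involution `st`; they parametrise the unitriangular
matrices in `SL_*^1(2, A)`. -/
def skewSet (st : A →+* A) : Set A := {a | st a = -a}

lemma mem_skewSet {a : A} : a ∈ skewSet st ↔ st a = -a := Iff.rfl

lemma injOn_skewSet_add_mul {c : A} (hc : IsUnit (c - st c)) :
    Set.InjOn (fun x : A × A ↦ x.1 + c * x.2) (skewSet st ×ˢ skewSet st) := by
  rintro ⟨s, t⟩ ⟨hs, ht⟩ ⟨s', t'⟩ ⟨hs', ht'⟩ (h : s + c * t = s' + c * t')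
  have h_star : st (s + c * t) = st (s' + c * t') := congrArg st h
  rw [map_add, map_add, map_mul, map_mul, hs, ht, hs', ht'] at h_star
  obtain rfl : t = t' := hc.mul_left_cancel (by linear_combination h + h_star)
  exact Prod.ext (add_right_cancel h) rfl

lemma exists_skewSet_add_mul_eq (hst : Function.Involutive st) {c : A} (hc : IsUnit (c - st c))
    {I : Ideal A} (hI : ∀ a ∈ I, st a ∈ I) {a : A} (ha : a ∈ I) :
    ∃ s ∈ skewSet st ∩ I, ∃ t ∈ skewSet st ∩ I, s + c * t = a := by
  obtain ⟨d, hd⟩ := hc.exists_right_inv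
  have hd_star : st d = -d := by
    have h_star := congrArg st hd
    rw [map_mul, map_sub, hst, map_one] at h_star
    exact hc.mul_left_cancel (by linear_combination hd - h_star)
  -- Applying `st` to `a = s + c * t` forces `a + st a = (c - st c) * t`.
  have ht : d * (a + st a) ∈ I := I.mul_mem_left d (I.add_mem ha (hI a ha))
  have ht_star : st (d * (a + st a)) = -(d * (a + st a)) := by
    rw [map_mul, map_add, hst, hd_star]; ring
  refine ⟨a - c * (d * (a + st a)), ⟨?_, I.sub_mem ha (I.mul_mem_left c ht)⟩,
    d * (a + st a), ⟨ht_star, ht⟩, sub_add_cancel a _⟩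
  rw [mem_skewSet, map_sub, map_mul, ht_star]
  linear_combination -(a + st a) * hd

lemma ncard_ideal_eq_ncard_skewSet_inter_sq (hst : Function.Involutive st) {c : A}
    (hc : IsUnit (c - st c)) {I : Ideal A} (hI : ∀ a ∈ I, st a ∈ I) :
    (I : Set A).ncard = (skewSet st ∩ I).ncard ^ 2 := by
  have hI_image : (I : Set A) =
      (fun x : A × A ↦ x.1 + c * x.2) '' ((skewSet st ∩ I) ×ˢ (skewSet st ∩ I)) := by
    ext a
    constructor
    · intro ha
      obtain ⟨s, hs, t, ht, rfl⟩ := exists_skewSet_add_mul_eq hst hc hI ha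
      exact ⟨(s, t), ⟨hs, ht⟩, rfl⟩
    · rintro ⟨⟨s, t⟩, ⟨hs, ht⟩, rfl⟩
      exact I.add_mem hs.2 (I.mul_mem_left c ht.2)
  have h_inj : Set.InjOn (fun x : A × A ↦ x.1 + c * x.2)
      ((skewSet st ∩ I) ×ˢ (skewSet st ∩ I)) :=
    (injOn_skewSet_add_mul hc).mono
      (Set.prod_mono Set.inter_subset_left Set.inter_subset_left)
  rw [hI_image, h_inj.ncard_image, Set.ncard_prod, ← hI_image, sq]

lemma natCard_eq_ncard_skewSet_sq (hst : Function.Involutive st) {c : A}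
    (hc : IsUnit (c - st c)) : Nat.card A = (skewSet st).ncard ^ 2 := by
  simpa using ncard_ideal_eq_ncard_skewSet_inter_sq hst hc (I := ⊤) (by simp)

end Skew

section LocalRing

open IsLocalRing

variable {A : Type*} [CommRing A] [IsLocalRing A]

lemma map_mem_maximalIdeal_of_involutive {st : A →+* A} (hst : Function.Involutive st) {a : A}
    (ha : a ∈ maximalIdeal A) : st a ∈ maximalIdeal A := by
  rw [mem_maximalIdeal, mem_nonunits_iff] at ha ⊢
  intro h
  exact ha (hst a ▸ h.map st)

lemma natCard_units_add_ncard_maximalIdeal [Finite A] :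
    Nat.card Aˣ + (maximalIdeal A : Set A).ncard = Nat.card A := by
  have h_compl : (maximalIdeal A : Set A)ᶜ = Set.range ((↑) : Aˣ → A) := by
    ext a
    simp [IsUnit]
  rw [← Set.ncard_add_ncard_compl (maximalIdeal A : Set A), h_compl,
    Set.ncard_range_of_injective Units.val_injective, add_comm]

lemma natCard_mul_ncard_maximalIdeal {F : Type*} [Field F] {f : A →+* F}
    (hf : Function.Surjective f) :
    Nat.card F * (maximalIdeal A : Set A).ncard = Nat.card A := by
  have h_ker : RingHom.ker f = maximalIdeal A :=
    eq_maximalIdeal (RingHom.ker_isMaximal_of_surjective f hf)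
  rw [← h_ker, ← Nat.card_congr (RingHom.quotientKerEquivOfSurjective hf).toEquiv]
  exact (AddSubgroup.card_eq_card_quotient_mul_card_addSubgroup
    (RingHom.ker f).toAddSubgroup).symm

end LocalRing

section SLstar

variable {A : Type} [CommRing A] {st : A →+* A}

lemma mem_SLstarSet_iff (hst : Function.Involutive st) (g : Matrix (Fin 2) (Fin 2) A) :
    g ∈ SLstarSet A st ↔ st (g 0 0) * g 1 0 + st (g 1 0) * g 0 0 = 0 ∧
      st (g 0 0) * g 1 1 + st (g 1 0) * g 0 1 = 1 ∧
      st (g 0 1) * g 1 1 + st (g 1 1) * g 0 1 = 0 := by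
  have h_prod : mStar A st g * jMat A * g =
      !![st (g 0 0) * g 1 0 + st (g 1 0) * g 0 0, st (g 0 0) * g 1 1 + st (g 1 0) * g 0 1;
        st (g 0 1) * g 1 0 + st (g 1 1) * g 0 0, st (g 0 1) * g 1 1 + st (g 1 1) * g 0 1] := by
    ext i j
    fin_cases i <;> fin_cases j <;>
      simp [mStar, jMat, Matrix.mul_apply, Fin.sum_univ_two, add_comm]
  -- The two off-diagonal equations are exchanged by `st`.
  have h_star : st (g 0 0) * g 1 1 + st (g 1 0) * g 0 1 = 1 →
      st (g 0 1) * g 1 0 + st (g 1 1) * g 0 0 = 1 := by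
    intro h
    have h' := congrArg st h
    simp only [map_add, map_mul, hst _, map_one] at h'
    linear_combination h'
  rw [SLstarSet, Set.mem_ofPred_eq, h_prod, jMat, ← Matrix.ext_iff]
  simp only [Fin.forall_fin_two, Matrix.of_apply, Matrix.cons_val_zero, Matrix.cons_val_one]
  tauto

/-- The matrix `diag(a, (a*)⁻¹) · [[1, 0], [s, 1]] · [[1, u], [0, 1]]`. For skew `s` and `u` these
make up the big Bruhat cell of `SL_*^1(2, A)`, the matrices with a unit in the top left corner. -/
def bigCell (st : A →+* A) (x : Aˣ × A × A) : Matrix (Fin 2) (Fin 2) A :=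
  !![↑x.1, x.1 * x.2.2; st ↑x.1⁻¹ * x.2.1, st ↑x.1⁻¹ * (1 + x.2.1 * x.2.2)]

lemma map_unit_mul_map_inv (a : Aˣ) : st a * st ↑a⁻¹ = 1 := by
  rw [← map_mul, a.mul_inv, map_one]

lemma bigCell_mem_SLstarSet_iff (hst : Function.Involutive st) (a : Aˣ) (s u : A) :
    bigCell st (a, s, u) ∈ SLstarSet A st ↔ s ∈ skewSet st ∧ u ∈ skewSet st := by
  have ha := a.mul_inv
  have ha_star := map_unit_mul_map_inv (st := st) a
  simp only [mem_SLstarSet_iff hst, mem_skewSet, bigCell, Matrix.of_apply, Matrix.cons_val_zero,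
    Matrix.cons_val_one, Matrix.cons_val', Matrix.cons_val_fin_one, map_mul, map_add, map_one,
    hst _]
  constructor
  · rintro ⟨h₁, -, h₃⟩
    have hs : st s = -s := by linear_combination h₁ - s * ha_star - st s * ha
    rw [hs] at h₃
    exact ⟨hs, by linear_combination h₃ - st u * (1 + s * u) * ha_star - (1 - s * st u) * u * ha⟩
  · rintro ⟨hs, hu⟩
    rw [hs, hu]
    refine ⟨?_, ?_, ?_⟩
    · linear_combination s * ha_star - s * ha
    · linear_combination (1 + s * u) * ha_star - s * u * ha
    · linear_combination -u * (1 + s * u) * ha_star + (1 + s * u) * u * ha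

lemma map_bigCell_zero_zero_mul_one_zero (x : Aˣ × A × A) :
    st (bigCell st x 0 0) * bigCell st x 1 0 = x.2.1 := by
  simp [bigCell, ← mul_assoc, map_unit_mul_map_inv]

lemma bigCell_injective : Function.Injective (bigCell st) := by
  rintro x y h
  have ha : x.1 = y.1 := Units.ext (congrFun₂ h 0 0)
  have hs : x.2.1 = y.2.1 := by
    rw [← map_bigCell_zero_zero_mul_one_zero (st := st), h, map_bigCell_zero_zero_mul_one_zero]
  have hu : x.1 * x.2.2 = x.1 * y.2.2 := by simpa [bigCell, ha] using congrFun₂ h 0 1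
  exact Prod.ext ha (Prod.ext hs (x.1.isUnit.mul_left_cancel hu))

lemma exists_bigCell_eq (hst : Function.Involutive st) {g : Matrix (Fin 2) (Fin 2) A}
    (hg : g ∈ SLstarSet A st) (h_unit : IsUnit (g 0 0)) : ∃ x, bigCell st x = g := by
  obtain ⟨h₁, h₂, -⟩ := (mem_SLstarSet_iff hst g).1 hg
  obtain ⟨a, ha⟩ := h_unit
  have h_inv := a.mul_inv
  have h_inv_star := map_unit_mul_map_inv (st := st) a
  rw [ha] at h_inv h_inv_star
  refine ⟨(a, st (g 0 0) * g 1 0, ↑a⁻¹ * g 0 1), ?_⟩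
  simp only [bigCell, ha, ← Matrix.ext_iff, Fin.forall_fin_two, Matrix.of_apply,
    Matrix.cons_val', Matrix.cons_val_zero, Matrix.cons_val_one, Matrix.cons_val_fin_one, true_and]
  refine ⟨?_, ?_, ?_⟩
  · linear_combination g 0 1 * h_inv
  · linear_combination g 1 0 * h_inv_star
  · linear_combination g 1 1 * h_inv_star - st ↑a⁻¹ * h₂ + st ↑a⁻¹ * g 0 1 * ↑a⁻¹ * h₁ -
      st ↑a⁻¹ * g 0 1 * st (g 1 0) * h_inv

lemma ncard_bigCell (hst : Function.Involutive st) (T : Set A) :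
    {g ∈ SLstarSet A st | IsUnit (g 0 0) ∧ st (g 0 0) * g 1 0 ∈ T}.ncard =
      Nat.card Aˣ * ((skewSet st ∩ T).ncard * (skewSet st).ncard) := by
  have h_image : {g ∈ SLstarSet A st | IsUnit (g 0 0) ∧ st (g 0 0) * g 1 0 ∈ T} =
      bigCell st '' (Set.univ ×ˢ (skewSet st ∩ T) ×ˢ skewSet st) := by
    ext g
    constructor
    · rintro ⟨hg, h_unit, hT⟩
      obtain ⟨⟨a, s, u⟩, rfl⟩ := exists_bigCell_eq hst hg h_unit
      rw [map_bigCell_zero_zero_mul_one_zero] at hT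
      obtain ⟨hs, hu⟩ := (bigCell_mem_SLstarSet_iff hst a s u).1 hg
      exact ⟨(a, s, u), ⟨Set.mem_univ a, ⟨hs, hT⟩, hu⟩, rfl⟩
    · rintro ⟨⟨a, s, u⟩, ⟨-, ⟨hs, hT⟩, hu⟩, rfl⟩
      refine ⟨(bigCell_mem_SLstarSet_iff hst a s u).2 ⟨hs, hu⟩, a.isUnit, ?_⟩
      rwa [map_bigCell_zero_zero_mul_one_zero]
  rw [h_image, Set.ncard_image_of_injective _ bigCell_injective, Set.ncard_prod, Set.ncard_prod,
    Set.ncard_univ]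

lemma jMat_mul_zero_apply (g : Matrix (Fin 2) (Fin 2) A) (j : Fin 2) :
    (jMat A * g) 0 j = g 1 j := by
  rw [Matrix.mul_apply, Fin.sum_univ_two]
  simp [jMat]

lemma jMat_mul_one_apply (g : Matrix (Fin 2) (Fin 2) A) (j : Fin 2) :
    (jMat A * g) 1 j = g 0 j := by
  rw [Matrix.mul_apply, Fin.sum_univ_two]
  simp [jMat]

lemma jMat_mul_involutive : Function.Involutive (jMat A * ·) := by
  intro g
  ext i j
  fin_cases i <;> simp [jMat_mul_zero_apply, jMat_mul_one_apply]

lemma mStar_jMat_mul (g : Matrix (Fin 2) (Fin 2) A) :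
    mStar A st (jMat A * g) = mStar A st g * jMat A := by
  have h_jMat : (jMat A).map st = (jMat A)ᵀ := by
    ext i j
    fin_cases i <;> fin_cases j <;> simp [jMat]
  rw [mStar, mStar, Matrix.map_mul, h_jMat, Matrix.transpose_mul, Matrix.transpose_transpose]

lemma jMat_mul_mem_SLstarSet_iff {g : Matrix (Fin 2) (Fin 2) A} :
    jMat A * g ∈ SLstarSet A st ↔ g ∈ SLstarSet A st := by
  have h_swap : jMat A * (jMat A * g) = g := jMat_mul_involutive g
  have h_prod : mStar A st (jMat A * g) * jMat A * (jMat A * g) = mStar A st g * jMat A * g := by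
    rw [mStar_jMat_mul, Matrix.mul_assoc _ (jMat A) (jMat A * g), h_swap]
  rw [SLstarSet, Set.mem_ofPred_eq, Set.mem_ofPred_eq, h_prod]

variable [IsLocalRing A]

open IsLocalRing

lemma isUnit_zero_zero_or_isUnit_one_zero (hst : Function.Involutive st)
    {g : Matrix (Fin 2) (Fin 2) A} (hg : g ∈ SLstarSet A st) :
    IsUnit (g 0 0) ∨ IsUnit (g 1 0) := by
  obtain ⟨-, h, -⟩ := (mem_SLstarSet_iff hst g).1 hg
  have of_star {a b : A} (hab : IsUnit (st a * b)) : IsUnit a :=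
    hst a ▸ (isUnit_of_mul_isUnit_left hab).map st
  exact (isUnit_or_isUnit_of_add_one h).imp of_star of_star

lemma jMat_mul_image_bigCell (hst : Function.Involutive st) :
    (jMat A * ·) '' {g ∈ SLstarSet A st | IsUnit (g 0 0) ∧ st (g 0 0) * g 1 0 ∈ maximalIdeal A} =
      {g ∈ SLstarSet A st | ¬IsUnit (g 0 0)} := by
  rw [Set.image_eq_preimage_of_inverse jMat_mul_involutive.leftInverse
    jMat_mul_involutive.rightInverse]
  ext g
  have h_or := isUnit_zero_zero_or_isUnit_one_zero hst (g := g)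
  have h_star : IsUnit (g 1 0) → IsUnit (st (g 1 0)) := fun h ↦ h.map st
  simp only [Set.mem_preimage, Set.mem_ofPred_eq, jMat_mul_mem_SLstarSet_iff, jMat_mul_zero_apply,
    jMat_mul_one_apply, mem_maximalIdeal, mem_nonunits_iff, IsUnit.mul_iff]
  tauto

theorem natCard_SLstarSet [Finite A] (hst : Function.Involutive st) :
    Nat.card (SLstarSet A st) = Nat.card Aˣ * (skewSet st).ncard *
      ((skewSet st).ncard + (skewSet st ∩ maximalIdeal A).ncard) := by
  have h_split : (SLstarSet A st).ncard = {g ∈ SLstarSet A st | IsUnit (g 0 0)}.ncard +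
      {g ∈ SLstarSet A st | ¬IsUnit (g 0 0)}.ncard :=
    (Set.ncard_inter_add_ncard_sdiff_eq_ncard (SLstarSet A st) {g | IsUnit (g 0 0)}).symm
  have h_cell : {g ∈ SLstarSet A st | IsUnit (g 0 0)}.ncard =
      Nat.card Aˣ * ((skewSet st).ncard * (skewSet st).ncard) := by
    simpa using ncard_bigCell hst Set.univ
  have h_swap : {g ∈ SLstarSet A st | ¬IsUnit (g 0 0)}.ncard =
      Nat.card Aˣ * ((skewSet st ∩ maximalIdeal A).ncard * (skewSet st).ncard) := by
    rw [← jMat_mul_image_bigCell hst, Set.ncard_image_of_injective _ jMat_mul_involutive.injective]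
    exact ncard_bigCell hst (maximalIdeal A)
  rw [Nat.card_coe_set_eq, h_split, h_cell, h_swap]
  ring

end SLstar

lemma algHom_involutive_of_isQuadraticExtension {k K : Type*} [Field k] [Field K] [Algebra k K]
    [Algebra.IsQuadraticExtension k K] (σ : K →ₐ[k] K) : Function.Involutive σ := by
  let τ : Gal(K/k) := (Algebra.IsAlgebraic.algEquivEquivAlgHom k K).symm σ
  have h_card : Nat.card Gal(K/k) ∣ 2 := by
    have h_le : Nat.card Gal(K/k) ≤ 2 := by
      rw [Nat.card_eq_fintype_card, ← Algebra.IsQuadraticExtension.finrank_eq_two k K]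
      exact AlgEquiv.card_le
    have h_pos : 0 < Nat.card Gal(K/k) := Nat.card_pos
    interval_cases Nat.card Gal(K/k) <;> decide
  have hτ : τ ^ 2 = 1 := orderOf_dvd_iff_pow_eq_one.1 ((orderOf_dvd_natCard τ).trans h_card)
  intro z
  rw [sq] at hτ
  exact DFunLike.congr_fun hτ z

namespace TruncPoly

section CommRing

variable {K : Type} [CommRing K] {n : ℕ}

lemma trStar_of (σ : K →+* K) (z : K) :
    trStar K σ n (AdjoinRoot.of _ z) = AdjoinRoot.of _ (σ z) := by
  simp [trStar]

lemma trStar_root (σ : K →+* K) :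
    trStar K σ n (AdjoinRoot.root _) = -AdjoinRoot.root _ := by
  simp [trStar]

lemma trStar_involutive {σ : K →+* K} (hσ : Function.Involutive σ) :
    Function.Involutive (trStar K σ n) := by
  have h_comp : (trStar K σ n).comp (trStar K σ n) = RingHom.id _ := by
    refine AdjoinRoot.ringHom_ext (RingHom.ext fun z ↦ ?_) ?_
    · simp [trStar_of, hσ z]
    · simp [trStar_root]
  exact DFunLike.congr_fun h_comp

/-- The coordinates with respect to the basis `1, x, …, x ^ (n - 1)`. -/
def equivFun [Nontrivial K] : TruncPoly K n ≃ₗ[K] (Fin n → K) :=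
  (AdjoinRoot.powerBasis' (monic_X_pow n)).basis.equivFun ≪≫ₗ
    LinearEquiv.funCongrLeft K K (finCongr (natDegree_X_pow n).symm)

instance [Nontrivial K] [Finite K] : Finite (TruncPoly K n) :=
  Finite.of_equiv _ equivFun.symm.toEquiv

lemma natCard_eq_pow [Nontrivial K] : Nat.card (TruncPoly K n) = Nat.card K ^ n := by
  rw [Nat.card_congr equivFun.toEquiv, Nat.card_fun, Nat.card_fin]

lemma isNilpotent_root : IsNilpotent (AdjoinRoot.root (X ^ n : K[X])) :=
  ⟨n, by rw [← AdjoinRoot.mk_X, ← map_pow, AdjoinRoot.mk_self]⟩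

variable [NeZero n]

/-- The augmentation `A_n → K`, `x ↦ 0`, which is the residue map of `A_n` if `K` is a field. -/
def constCoeff : TruncPoly K n →+* K :=
  AdjoinRoot.lift (RingHom.id K) 0 (by simp [NeZero.ne n])

lemma constCoeff_of (z : K) : constCoeff (AdjoinRoot.of (X ^ n) z) = z := by
  simp [constCoeff]

lemma constCoeff_surjective : Function.Surjective (constCoeff : TruncPoly K n →+* K) :=
  fun z ↦ ⟨_, constCoeff_of z⟩

instance isLocalHom_constCoeff : IsLocalHom (constCoeff : TruncPoly K n →+* K) where
  map_nonunit a h := by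
    induction a using AdjoinRoot.induction_on with
    | ih f =>
      have h_split : AdjoinRoot.mk (X ^ n) f =
          AdjoinRoot.root _ * AdjoinRoot.mk _ f.divX + AdjoinRoot.of _ (f.coeff 0) := by
        rw [← AdjoinRoot.mk_X, ← AdjoinRoot.mk_C, ← map_mul, ← map_add, X_mul_divX_add]
      have h_coeff : constCoeff (AdjoinRoot.mk (X ^ n) f) = f.coeff 0 := by
        simp [constCoeff, coeff_zero_eq_eval_zero]
      rw [h_coeff] at h
      rw [h_split]
      exact ((Commute.all _ _).isNilpotent_mul_right
        isNilpotent_root).isUnit_add_right_of_commute (h.map _) (Commute.all _ _)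

instance [IsLocalRing K] : IsLocalRing (TruncPoly K n) :=
  constCoeff.domain_isLocalRing

end CommRing

section Field

open IsLocalRing

variable {K : Type} [Field K]

lemma exists_isUnit_sub_trStar {σ : K →+* K} (hσ : σ ≠ RingHom.id K) (n : ℕ) :
    ∃ c, IsUnit (c - trStar K σ n c) := by
  obtain ⟨z, hz : σ z ≠ z⟩ := DFunLike.ne_iff.1 hσ
  refine ⟨AdjoinRoot.of _ z, ?_⟩
  rw [trStar_of, ← map_sub]
  exact (sub_ne_zero.2 hz.symm).isUnit.map _

variable [Finite K] (n : ℕ)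

lemma ncard_maximalIdeal :
    (maximalIdeal (TruncPoly K (n + 1)) : Set (TruncPoly K (n + 1))).ncard = Nat.card K ^ n := by
  have h := natCard_mul_ncard_maximalIdeal (constCoeff_surjective (K := K) (n := n + 1))
  exact Nat.eq_of_mul_eq_mul_left Nat.card_pos (h.trans (natCard_eq_pow.trans (pow_succ' _ n)))

lemma natCard_units : Nat.card (TruncPoly K (n + 1))ˣ = (Nat.card K - 1) * Nat.card K ^ n := by
  have h := natCard_units_add_ncard_maximalIdeal (A := TruncPoly K (n + 1))
  rw [ncard_maximalIdeal, natCard_eq_pow] at h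
  rw [Nat.sub_mul, one_mul, ← pow_succ']
  exact Nat.eq_sub_of_add_eq h

end Field

end TruncPoly

theorem card_SLstar_truncPoly_general {K : Type} [Field K] [Finite K] {q : ℕ}
    (hq : Nat.card K = q ^ 2) {σ : K →+* K} (hσ : Function.Involutive σ)
    (hσ_ne : σ ≠ RingHom.id K) {n : ℕ} (hn : n ≠ 0) :
    Nat.card (SLstarSet (TruncPoly K n) (trStar K σ n)) =
      (q ^ 2 - 1) * q ^ (4 * n - 3) * (q + 1) := by
  obtain ⟨m, rfl⟩ := Nat.exists_eq_add_one_of_ne_zero hn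
  have hst := TruncPoly.trStar_involutive (n := m + 1) hσ
  obtain ⟨c, hc⟩ := TruncPoly.exists_isUnit_sub_trStar hσ_ne (m + 1)
  have h_skew : (skewSet (trStar K σ (m + 1))).ncard = q ^ (m + 1) := by
    have h := natCard_eq_ncard_skewSet_sq hst hc
    rw [TruncPoly.natCard_eq_pow, hq, pow_right_comm] at h
    exact (Nat.pow_left_injective two_ne_zero h).symm
  have h_skew_max : (skewSet (trStar K σ (m + 1)) ∩
      IsLocalRing.maximalIdeal (TruncPoly K (m + 1))).ncard = q ^ m := by
    have h := ncard_ideal_eq_ncard_skewSet_inter_sq hst hc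
      fun _ ↦ map_mem_maximalIdeal_of_involutive hst
    rw [TruncPoly.ncard_maximalIdeal, hq, pow_right_comm] at h
    exact (Nat.pow_left_injective two_ne_zero h).symm
  have h_exp : 4 * (m + 1) - 3 = 4 * m + 1 := by omega
  rw [natCard_SLstarSet hst, TruncPoly.natCard_units, hq, h_skew, h_skew_max, h_exp]
  ring

/-- the order of `SL_*^1(2,A_n)` is `(q²−1)·q^{4n−3}·(q+1)`. -/
theorem card_SLstar_truncPoly
    (p t q : ℕ) (hp : p.Prime) (hp2 : Odd p) (ht : 0 < t) (hq : q = p ^ t)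
    (k K : Type) [Field k] [Fintype k] [Field K] [Fintype K] [Algebra k K]
    (hcardk : Fintype.card k = q) (hcardK : Fintype.card K = q ^ 2)
    (Δ : K) (hΔ : Δ ∉ Set.range (algebraMap k K))
    (hΔ2 : Δ ^ 2 ∈ Set.range (algebraMap k K))
    (σ : K →+* K) (hσk : ∀ c : k, σ (algebraMap k K c) = algebraMap k K c)
    (hσne : σ ≠ RingHom.id K) (hσΔ : σ Δ = -Δ)
    (n : ℕ) (hn : 0 < n) :
    Nat.card (SLstarSet (TruncPoly K n) (trStar K σ n)) =
      (q ^ 2 - 1) * q ^ (4 * n - 3) * (q + 1) := by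
  have h_finrank : Module.finrank k K = 2 := by
    have h_pow := Module.card_eq_pow_finrank (K := k) (V := K)
    rw [hcardk, hcardK] at h_pow
    exact (Nat.pow_right_injective (hcardk ▸ Fintype.one_lt_card) h_pow).symm
  have : Algebra.IsQuadraticExtension k K := { finrank_eq_two' := h_finrank }
  have hσ : Function.Involutive σ :=
    algHom_involutive_of_isQuadraticExtension { σ with commutes' := hσk }
  exact card_SLstar_truncPoly_general (by rw [Nat.card_eq_fintype_card, hcardK]) hσ hσne hn.ne'
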